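/- The characteristic polynomial of P_∅ factors as charpoly(P_∅) = (X − 1)·(X + 1/(n−1))^{n−1}·charpoly((1/(n−1))·Ψ_μ) in ℝ[X]. (Equivalently, the spectrum of P_∅ as a multiset is the union of the spectrum of (1/(n−1))·Ψ_μ, n−1 copies of −1/(n−1), and one copy of 1.) -/

import Mathlib

open scoped Classical
open Finset Polynomial

noncomputable section

namespace PaperStmt

variable {n : ℕ}

/-- Probability of an event under `μ`. -/
def prE (μ : Finset (Fin n) → ℝ) (E : Finset (Fin n) → Prop) : ℝ :=
  ∑ S : Finset (Fin n), if E S then μ S else 0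

/-- Conditional probability `Pr[E | F]` under `μ`. -/
def condPrE (μ : Finset (Fin n) → ℝ) (E F : Finset (Fin n) → Prop) : ℝ :=
  prE μ (fun S => E S ∧ F S) / prE μ F

/-- The pairwise influence matrix `Ψ_μ`. -/
def psi (μ : Finset (Fin n) → ℝ) : Matrix (Fin n) (Fin n) ℝ :=
  fun i j => if i = j then 0 else
    condPrE μ (fun S => j ∈ S) (fun S => i ∈ S)
      - condPrE μ (fun S => j ∈ S) (fun S => i ∉ S)

/-- The event "`i` has state `s`" (`true` = in, `false` = out). -/
def stateEvent (i : Fin n) (s : Bool) : Finset (Fin n) → Prop :=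
  fun S => if s then i ∈ S else i ∉ S

/-- The skeleton walk matrix `P_∅`, indexed by pairs `(i, s) ∈ [n] × {in, out}`. -/
def skeletonWalk (μ : Finset (Fin n) → ℝ) :
    Matrix (Fin n × Bool) (Fin n × Bool) ℝ :=
  fun p q => if p.1 = q.1 then 0 else
    (1 / ((n : ℝ) - 1)) * condPrE μ (stateEvent q.1 q.2) (stateEvent p.1 p.2)

/-!
The two states of `i` have conditional probabilities summing to one, so the skeleton walk projects
along `(i, s) ↦ i` to the simple random walk on the complete graph, whose eigenvalues are `1` and,
with multiplicity `n - 1`, `-1 / (n - 1)`. On the signed measures killed by this projection the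
skeleton walk acts by the difference of its `in` and `out` rows, the scaled influence matrix.
-/

theorem charpoly_fromBlocks_of_add_eq_add {m R : Type*} [Fintype m] [DecidableEq m] [CommRing R]
    {A B C D : Matrix m m R} (h : A + B = C + D) :
    (Matrix.fromBlocks A B C D).charpoly = (A + B).charpoly * (D - B).charpoly := by
  have similar : Matrix.fromBlocks A B C D
      = Matrix.fromBlocks 1 0 1 1 * (Matrix.fromBlocks (A + B) B 0 (D - B)
        * Matrix.fromBlocks 1 0 (-1) 1) := by
    have hC : C = A + (B - D) := by rw [← add_sub_assoc, h, add_sub_cancel_right]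
    simp [Matrix.fromBlocks_multiply, hC]
  rw [similar, Matrix.charpoly_mul_comm, mul_assoc, Matrix.fromBlocks_multiply]
  simp [Matrix.charpoly_fromBlocks_zero₂₁]

theorem charpoly_eq_mul_of_bool_lumpable {m R : Type*} [Fintype m] [DecidableEq m] [CommRing R]
    (P : Matrix (m × Bool) (m × Bool) R) (Q : Matrix m m R)
    (h : ∀ i s j, P (i, s) (j, false) + P (i, s) (j, true) = Q i j) :
    P.charpoly = Q.charpoly
      * (Matrix.of fun i j => P (i, true) (j, true) - P (i, false) (j, true)).charpoly := by
  let e : m × Bool ≃ m ⊕ m := (Equiv.prodComm m Bool).trans (Equiv.boolProdEquivSum m)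
  let block (s t : Bool) : Matrix m m R := Matrix.of fun i j => P (i, s) (j, t)
  have reindex_eq : Matrix.reindex e e P = Matrix.fromBlocks
      (block false false) (block false true) (block true false) (block true true) := by
    ext (i | i) (j | j) <;> rfl
  have row_sum (s : Bool) : block s false + block s true = Q := by
    ext i j
    exact h i s j
  rw [← Matrix.charpoly_reindex e, reindex_eq,
    charpoly_fromBlocks_of_add_eq_add ((row_sum false).trans (row_sum true).symm), row_sum]
  rfl

theorem charpoly_smul_adjMatrix_completeGraph {V R : Type*} [Fintype V] [DecidableEq V]
    [Nonempty V] [CommRing R] (c : R) :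
    (c • (SimpleGraph.completeGraph V).adjMatrix R).charpoly
      = (X - C (((Fintype.card V : R) - 1) * c)) * (X + C c) ^ (Fintype.card V - 1) := by
  have rank_one_sub_scalar : c • (SimpleGraph.completeGraph V).adjMatrix R
      = Matrix.vecMulVec (fun _ => c) 1 - Matrix.scalar V c := by
    ext i j
    rcases eq_or_ne i j with rfl | hij
    · simp
    · simp [hij]
  have dot : (fun _ : V => c) ⬝ᵥ 1 = Fintype.card V * c := by simp [dotProduct]
  rw [rank_one_sub_scalar, Matrix.charpoly_sub_scalar, Matrix.charpoly_vecMulVec, dot]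
  obtain ⟨k, hk⟩ := Nat.exists_eq_succ_of_ne_zero (Fintype.card_ne_zero (α := V))
  simp only [hk, Nat.succ_sub_one, pow_succ, smul_eq_C_mul, sub_comp, mul_comp, pow_comp, X_comp,
    C_comp, C_mul, C_sub, C_1]
  ring

theorem prE_and_add_prE_not_and (μ : Finset (Fin n) → ℝ) (E F : Finset (Fin n) → Prop) :
    prE μ (fun S => E S ∧ F S) + prE μ (fun S => ¬ E S ∧ F S) = prE μ F := by
  simp only [prE, ← sum_add_distrib]
  refine sum_congr rfl fun S _ => ?_
  by_cases hE : E S <;> simp [hE]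

theorem prE_add_prE_not (μ : Finset (Fin n) → ℝ) (E : Finset (Fin n) → Prop) :
    prE μ E + prE μ (fun S => ¬ E S) = ∑ S, μ S := by
  have prE_true : prE μ (fun _ => True) = ∑ S, μ S := by simp [prE]
  simpa only [and_true, prE_true] using prE_and_add_prE_not_and μ E fun _ => True

theorem condPrE_add_condPrE_not {μ : Finset (Fin n) → ℝ} (E : Finset (Fin n) → Prop)
    {F : Finset (Fin n) → Prop} (hF : prE μ F ≠ 0) :
    condPrE μ E F + condPrE μ (fun S => ¬ E S) F = 1 := by
  rw [condPrE, condPrE, ← add_div, prE_and_add_prE_not_and, div_self hF]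

theorem stateEvent_true (i : Fin n) : stateEvent i true = fun S => i ∈ S :=
  funext fun _ => if_pos rfl

theorem stateEvent_false (i : Fin n) : stateEvent i false = fun S => i ∉ S :=
  funext fun _ => if_neg Bool.false_ne_true

theorem prE_stateEvent_ne_zero {μ : Finset (Fin n) → ℝ} (hsum : ∑ S, μ S = 1) {i : Fin n}
    (h0 : prE μ (fun S => i ∈ S) ≠ 0) (h1 : prE μ (fun S => i ∈ S) ≠ 1) (s : Bool) :
    prE μ (stateEvent i s) ≠ 0 := by
  have total := prE_add_prE_not μ fun S => i ∈ S
  cases s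
  · rw [stateEvent_false]
    exact fun hout => h1 (by linarith)
  · rwa [stateEvent_true]

theorem skeletonWalk_to_out_add_to_in {μ : Finset (Fin n) → ℝ} {i : Fin n} {s : Bool}
    (his : prE μ (stateEvent i s) ≠ 0) (j : Fin n) :
    skeletonWalk μ (i, s) (j, false) + skeletonWalk μ (i, s) (j, true)
      = ((1 / ((n : ℝ) - 1)) • (SimpleGraph.completeGraph (Fin n)).adjMatrix ℝ) i j := by
  rcases eq_or_ne i j with rfl | hij
  · simp [skeletonWalk]
  · have states_sum : condPrE μ (stateEvent j false) (stateEvent i s)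
        + condPrE μ (stateEvent j true) (stateEvent i s) = 1 := by
      rw [add_comm, stateEvent_true, stateEvent_false]
      exact condPrE_add_condPrE_not _ his
    simp [skeletonWalk, hij, ← mul_add, states_sum]

theorem skeletonWalk_from_in_sub_from_out (μ : Finset (Fin n) → ℝ) (i j : Fin n) :
    skeletonWalk μ (i, true) (j, true) - skeletonWalk μ (i, false) (j, true)
      = ((1 / ((n : ℝ) - 1)) • psi μ) i j := by
  rcases eq_or_ne i j with rfl | hij
  · simp [skeletonWalk, psi]
  · simp [skeletonWalk, psi, hij, stateEvent_true, stateEvent_false, mul_sub]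

theorem statement6_general (hn : 2 ≤ n) {μ : Finset (Fin n) → ℝ}
    (hμ : ∀ i s, prE μ (stateEvent i s) ≠ 0) :
    (skeletonWalk μ).charpoly
      = (X - 1) * (X + C (1 / ((n : ℝ) - 1))) ^ (n - 1)
        * ((1 / ((n : ℝ) - 1)) • psi μ).charpoly := by
  have : Nonempty (Fin n) := ⟨⟨0, by lia⟩⟩
  have hn1 : (n : ℝ) - 1 ≠ 0 := by
    rw [sub_ne_zero]
    exact_mod_cast (show n ≠ 1 by lia)
  have influence : (Matrix.of fun i j =>
      skeletonWalk μ (i, true) (j, true) - skeletonWalk μ (i, false) (j, true))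
      = (1 / ((n : ℝ) - 1)) • psi μ :=
    Matrix.ext (skeletonWalk_from_in_sub_from_out μ)
  rw [charpoly_eq_mul_of_bool_lumpable _ _
      fun i s j => skeletonWalk_to_out_add_to_in (hμ i s) j,
    influence, charpoly_smul_adjMatrix_completeGraph, Fintype.card_fin,
    mul_one_div_cancel hn1, C_1]

/-- The characteristic polynomial of `P_∅` factors as
`(X - 1) · (X + 1/(n-1))^(n-1) · charpoly((1/(n-1)) • Ψ_μ)`. -/
theorem statement6 (n : ℕ) (hn : 2 ≤ n) (μ : Finset (Fin n) → ℝ)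
    (hpos : ∀ S, 0 ≤ μ S) (hsum : ∑ S : Finset (Fin n), μ S = 1)
    (hmarg : ∀ i : Fin n, 0 < prE μ (fun S => i ∈ S)
      ∧ prE μ (fun S => i ∈ S) < 1) :
    (skeletonWalk μ).charpoly
      = (X - 1) * (X + C (1 / ((n : ℝ) - 1))) ^ (n - 1)
        * ((1 / ((n : ℝ) - 1)) • psi μ).charpoly :=
  statement6_general hn fun i => prE_stateEvent_ne_zero hsum (hmarg i).1.ne' (hmarg i).2.ne

end PaperStmt
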